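/- Let α ≠ 0 be fixed. Let v, w : (−1,1) → ℝ be C¹, positive, each strictly decreasing on (−1,0), strictly increasing on (0,1), and tending to +∞ as x → ±1, with minimum values c_v = v(0) > 0 and c_w = w(0) > 0. Suppose that for every λ ∈ ℝ the two-dimensional Lebesgue measure of {(x,ξ) ∈ (−1,1) × ℝ : ξ²/v(x) + α²v(x) < λ} equals that of {(x,ξ) ∈ (−1,1) × ℝ : ξ²/w(x) + α²w(x) < λ}. Then c_v = c_w, and for every s > c_v the one-dimensional Lebesgue measure of {x ∈ (−1,1) : v(x) < s} equals that of {x ∈ (−1,1) : w(x) < s}. -/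

import Mathlib

open Set MeasureTheory Filter Topology

/-!
Fubini turns the area of `{ξ²/v + α²v < α²τ}` into `2|α| ∫ √t √(τ - t)₊ dρ(t)`, where `ρ` is the
pushforward of Lebesgue measure by `v`. This is the Abel transform of order `1/2` of the measure
`√t dρ(t)`. As in Abel's classical inversion, integrating it against `(T - τ) ^ (-1/2)` produces,
up to a beta value, the transform of order `1`, which is `∫ (T - t)₊ √t dρ(t)`. Its difference
quotients in `T` recover the distribution function of `√t dρ(t)`, hence `ρ`, since `v` is positive.
The minimum of `v` is then the threshold above which the sublevel sets have positive measure.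
-/

open scoped ENNReal

/-- The Abel transform of order `p` of a measure `ν` on the line, `τ ↦ ∫ (τ - t)₊ ^ p dν(t)`. Up to
the factor `Γ (p + 1)`, it is the Riemann–Liouville integral of order `p` of the distribution
function of `ν`. The positive part is encoded by `ENNReal.ofReal`, so only `p > 0` is meaningful. -/
noncomputable def abelTransform (p : ℝ) (ν : Measure ℝ) (τ : ℝ) : ℝ≥0∞ :=
  ∫⁻ t, ENNReal.ofReal (τ - t) ^ p ∂ν

section SemigroupLaw

open ProbabilityTheory (beta beta_pos)

lemma lintegral_Ioo_zero_one_rpow_mul_rpow {a b : ℝ} (ha : 0 < a) (hb : 0 < b) :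
    ∫⁻ u in Ioo (0 : ℝ) 1, ENNReal.ofReal u ^ (a - 1) * ENNReal.ofReal (1 - u) ^ (b - 1)
      = ENNReal.ofReal (beta a b) := by
  have hβ : 0 < beta a b := beta_pos ha hb
  have hpdf := ProbabilityTheory.lintegral_betaPDF_eq_one ha hb
  rw [ProbabilityTheory.lintegral_betaPDF] at hpdf
  rw [← mul_one (ENNReal.ofReal (beta a b)), ← hpdf, ← lintegral_const_mul _ (by fun_prop)]
  refine setLIntegral_congr_fun measurableSet_Ioo fun u hu => ?_
  have hu' : 0 < 1 - u := sub_pos.2 hu.2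
  rw [ENNReal.ofReal_rpow_of_pos hu.1, ENNReal.ofReal_rpow_of_pos hu',
    ← ENNReal.ofReal_mul (Real.rpow_nonneg hu.1.le _), ← ENNReal.ofReal_mul hβ.le]
  congr 1
  field_simp

lemma setLIntegral_Ioo_eq_lintegral_Ioo_zero_one {t T : ℝ} (h : t < T) (g : ℝ → ℝ≥0∞) :
    ∫⁻ τ in Ioo t T, g τ
      = ∫⁻ u in Ioo (0 : ℝ) 1, ENNReal.ofReal (T - t) * g ((T - t) * u + t) := by
  have hd : 0 < T - t := sub_pos.2 h
  have himage : ((T - t) * · + t) '' Ioo 0 1 = Ioo t T := by simp [image_affine_Ioo hd]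
  have hderiv (u : ℝ) : HasDerivAt ((T - t) * · + t) (T - t) u := by
    simpa using ((hasDerivAt_id u).const_mul (T - t)).add_const t
  have hinj : Function.Injective ((T - t) * · + t) := fun x y hxy => by simpa [hd.ne'] using hxy
  rw [← himage, lintegral_image_eq_lintegral_abs_deriv_mul measurableSet_Ioo
    (fun u _ => (hderiv u).hasDerivWithinAt) hinj.injOn, abs_of_pos hd]

lemma lintegral_Ioo_rpow_mul_rpow {a b t T : ℝ} (ha : 0 < a) (hb : 0 < b) (h : t < T) :
    ∫⁻ τ in Ioo t T, ENNReal.ofReal (τ - t) ^ (a - 1) * ENNReal.ofReal (T - τ) ^ (b - 1)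
      = ENNReal.ofReal (beta a b) * ENNReal.ofReal (T - t) ^ (a + b - 1) := by
  set c := ENNReal.ofReal (T - t)
  have hd : 0 ≤ T - t := sub_nonneg.2 h.le
  have hc : c ≠ 0 := by simpa [c] using h
  have hc' : c ≠ ∞ := ENNReal.ofReal_ne_top
  have hcpow : c * c ^ (a - 1) * c ^ (b - 1) = c ^ (a + b - 1) := by
    nth_rw 1 [← ENNReal.rpow_one c]
    rw [← ENNReal.rpow_add _ _ hc hc', ← ENNReal.rpow_add _ _ hc hc']
    ring_nf
  rw [setLIntegral_Ioo_eq_lintegral_Ioo_zero_one h, ← lintegral_Ioo_zero_one_rpow_mul_rpow ha hb,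
    mul_comm, ← lintegral_const_mul _ (by fun_prop)]
  refine lintegral_congr fun u => ?_
  have hleft : ENNReal.ofReal ((T - t) * u + t - t) = c * ENNReal.ofReal u := by
    rw [add_sub_cancel_right, ENNReal.ofReal_mul hd]
  have hright : ENNReal.ofReal (T - ((T - t) * u + t)) = c * ENNReal.ofReal (1 - u) := by
    rw [← ENNReal.ofReal_mul hd]
    ring_nf
  rw [hleft, hright, ENNReal.mul_rpow_of_ne_top hc' ENNReal.ofReal_ne_top,
    ENNReal.mul_rpow_of_ne_top hc' ENNReal.ofReal_ne_top, ← hcpow]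
  ring

lemma lintegral_Iio_rpow_mul_rpow {p a : ℝ} (hp : 0 < p) (ha : 0 < a) (t T : ℝ) :
    ∫⁻ τ in Iio T, ENNReal.ofReal (T - τ) ^ (a - 1) * ENNReal.ofReal (τ - t) ^ p
      = ENNReal.ofReal (beta (p + 1) a) * ENNReal.ofReal (T - t) ^ (p + a) := by
  have hsupport : (Function.support fun τ : ℝ =>
      ENNReal.ofReal (T - τ) ^ (a - 1) * ENNReal.ofReal (τ - t) ^ p) ⊆ Ioi t := by
    refine Function.support_subset_iff'.2 fun τ hτ => ?_
    rw [ENNReal.ofReal_of_nonpos (sub_nonpos.2 (not_lt.1 hτ)), ENNReal.zero_rpow_of_pos hp,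
      mul_zero]
  rw [← setLIntegral_eq_of_support_subset hsupport, Measure.restrict_restrict measurableSet_Ioi,
    Ioi_inter_Iio]
  rcases lt_or_ge t T with h | h
  · have hbeta := lintegral_Ioo_rpow_mul_rpow (a := p + 1) (by positivity) ha h
    rw [add_sub_cancel_right, add_right_comm, add_sub_cancel_right] at hbeta
    simpa only [mul_comm] using hbeta
  · rw [Ioo_eq_empty h.not_gt, Measure.restrict_empty, lintegral_zero_measure,
      ENNReal.ofReal_of_nonpos (sub_nonpos.2 h), ENNReal.zero_rpow_of_pos (by positivity), mul_zero]

lemma lintegral_Iio_rpow_mul_abelTransform {p a : ℝ} (hp : 0 < p) (ha : 0 < a) (ν : Measure ℝ)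
    [SFinite ν] (T : ℝ) :
    ∫⁻ τ in Iio T, ENNReal.ofReal (T - τ) ^ (a - 1) * abelTransform p ν τ
      = ENNReal.ofReal (beta (p + 1) a) * abelTransform (p + a) ν T := by
  calc ∫⁻ τ in Iio T, ENNReal.ofReal (T - τ) ^ (a - 1) * abelTransform p ν τ
    _ = ∫⁻ τ in Iio T, ∫⁻ t, ENNReal.ofReal (T - τ) ^ (a - 1) * ENNReal.ofReal (τ - t) ^ p ∂ν :=
      lintegral_congr fun τ => (lintegral_const_mul _ (by fun_prop)).symm
    _ = ∫⁻ t, (∫⁻ τ in Iio T, ENNReal.ofReal (T - τ) ^ (a - 1) * ENNReal.ofReal (τ - t) ^ p) ∂ν :=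
      lintegral_lintegral_swap (by fun_prop)
    _ = ∫⁻ t, ENNReal.ofReal (beta (p + 1) a) * ENNReal.ofReal (T - t) ^ (p + a) ∂ν :=
      lintegral_congr fun t => lintegral_Iio_rpow_mul_rpow hp ha t T
    _ = ENNReal.ofReal (beta (p + 1) a) * abelTransform (p + a) ν T :=
      lintegral_const_mul _ (by fun_prop)

lemma abelTransform_add_eq_of_abelTransform_eq {p a : ℝ} (hp : 0 < p) (ha : 0 < a)
    {ν₁ ν₂ : Measure ℝ} [SFinite ν₁] [SFinite ν₂] (h : abelTransform p ν₁ = abelTransform p ν₂) :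
    abelTransform (p + a) ν₁ = abelTransform (p + a) ν₂ := by
  funext T
  have hβ : ENNReal.ofReal (beta (p + 1) a) ≠ 0 := by
    simpa using beta_pos (by positivity : 0 < p + 1) ha
  refine (ENNReal.mul_right_inj hβ ENNReal.ofReal_ne_top).1 ?_
  rw [← lintegral_Iio_rpow_mul_abelTransform hp ha, ← lintegral_Iio_rpow_mul_abelTransform hp ha, h]

end SemigroupLaw

section Injectivity

variable {ν₁ ν₂ : Measure ℝ}

lemma mul_measure_Iic_add_abelTransform_one_le (ν : Measure ℝ) {r T : ℝ} (h : r ≤ T) :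
    ENNReal.ofReal (T - r) * ν (Iic r) + abelTransform 1 ν r ≤ abelTransform 1 ν T := by
  simp only [abelTransform, ENNReal.rpow_one]
  rw [← lintegral_indicator_const measurableSet_Iic, ← lintegral_add_right _ (by fun_prop)]
  refine lintegral_mono fun t => ?_
  by_cases ht : t ∈ Iic r
  · rw [indicator_of_mem ht, ← ENNReal.ofReal_add (sub_nonneg.2 h) (sub_nonneg.2 ht),
      sub_add_sub_cancel]
  · rw [indicator_of_notMem ht, zero_add]
    gcongr

lemma abelTransform_one_le_mul_measure_Iio_add (ν : Measure ℝ) (r T : ℝ) :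
    abelTransform 1 ν T ≤ ENNReal.ofReal (T - r) * ν (Iio T) + abelTransform 1 ν r := by
  simp only [abelTransform, ENNReal.rpow_one]
  rw [← lintegral_indicator_const measurableSet_Iio, ← lintegral_add_right _ (by fun_prop)]
  refine lintegral_mono fun t => ?_
  by_cases ht : t ∈ Iio T
  · rw [indicator_of_mem ht, ← sub_add_sub_cancel T r t]
    exact ENNReal.ofReal_add_le
  · rw [ENNReal.ofReal_of_nonpos (sub_nonpos.2 (not_lt.1 ht))]
    exact zero_le

lemma measure_Iic_le_measure_Iio_of_abelTransform_one_eq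
    (h : abelTransform 1 ν₁ = abelTransform 1 ν₂) {r T : ℝ} (hfin : abelTransform 1 ν₁ r ≠ ∞)
    (hrT : r < T) : ν₁ (Iic r) ≤ ν₂ (Iio T) := by
  have hmul : ENNReal.ofReal (T - r) * ν₁ (Iic r) ≤ ENNReal.ofReal (T - r) * ν₂ (Iio T) := by
    refine (ENNReal.add_le_add_iff_right hfin).1 ?_
    calc ENNReal.ofReal (T - r) * ν₁ (Iic r) + abelTransform 1 ν₁ r
      _ ≤ abelTransform 1 ν₁ T := mul_measure_Iic_add_abelTransform_one_le ν₁ hrT.le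
      _ = abelTransform 1 ν₂ T := by rw [h]
      _ ≤ ENNReal.ofReal (T - r) * ν₂ (Iio T) + abelTransform 1 ν₂ r :=
        abelTransform_one_le_mul_measure_Iio_add ν₂ r T
      _ = ENNReal.ofReal (T - r) * ν₂ (Iio T) + abelTransform 1 ν₁ r := by rw [h]
  exact (ENNReal.mul_le_mul_iff_right (by simpa using hrT) ENNReal.ofReal_ne_top).1 hmul

lemma measure_Iio_le_of_forall_measure_Iic_le {T : ℝ} {c : ℝ≥0∞} (ν : Measure ℝ)
    (h : ∀ r < T, ν (Iic r) ≤ c) : ν (Iio T) ≤ c := by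
  obtain ⟨u, hu_mono, hu_lt, hu_lim⟩ := exists_seq_strictMono_tendsto T
  have hIic : Monotone fun n => Iic (u n) := fun _ _ hmn => Iic_subset_Iic.2 (hu_mono.monotone hmn)
  rw [← iUnion_Iic_eq_Iio_of_lt_of_tendsto hu_lt hu_lim, hIic.measure_iUnion]
  exact iSup_le fun n => h (u n) (hu_lt n)

lemma measure_eq_of_forall_measure_Iio_eq (hfin : ∀ T, ν₁ (Iio T) ≠ ∞)
    (h : ∀ T, ν₁ (Iio T) = ν₂ (Iio T)) : ν₁ = ν₂ := by
  refine Measure.ext_of_Ico' ν₁ ν₂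
    (fun a b _ => measure_ne_top_of_subset Ico_subset_Iio_self (hfin b)) fun a b hab => ?_
  rw [← Iio_sdiff_Iio, measure_sdiff (Iio_subset_Iio hab.le) nullMeasurableSet_Iio (hfin a),
    measure_sdiff (Iio_subset_Iio hab.le) nullMeasurableSet_Iio (h a ▸ hfin a), h, h]

lemma measure_eq_of_abelTransform_one_eq (hfin : ∀ T, abelTransform 1 ν₁ T ≠ ∞)
    (h : abelTransform 1 ν₁ = abelTransform 1 ν₂) : ν₁ = ν₂ := by
  have hIio_fin (T : ℝ) : ν₁ (Iio T) ≠ ∞ := by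
    have hle := le_of_add_le_left
      (mul_measure_Iic_add_abelTransform_one_le ν₁ (le_add_of_nonneg_right zero_le_one : T ≤ T + 1))
    rw [add_sub_cancel_left, ENNReal.ofReal_one, one_mul] at hle
    exact measure_ne_top_of_subset Iio_subset_Iic_self (ne_top_of_le_ne_top (hfin _) hle)
  refine measure_eq_of_forall_measure_Iio_eq hIio_fin fun T => le_antisymm ?_ ?_
  · exact measure_Iio_le_of_forall_measure_Iic_le ν₁ fun r hr =>
      measure_Iic_le_measure_Iio_of_abelTransform_one_eq h (hfin r) hr
  · exact measure_Iio_le_of_forall_measure_Iic_le ν₂ fun r hr =>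
      measure_Iic_le_measure_Iio_of_abelTransform_one_eq h.symm (h ▸ hfin r) hr

theorem measure_eq_of_abelTransform_eq {p : ℝ} (hp : 0 < p) (hp' : p < 1) [SFinite ν₁] [SFinite ν₂]
    (hfin : ∀ T, abelTransform 1 ν₁ T ≠ ∞) (h : abelTransform p ν₁ = abelTransform p ν₂) :
    ν₁ = ν₂ := by
  refine measure_eq_of_abelTransform_one_eq hfin ?_
  simpa using abelTransform_add_eq_of_abelTransform_eq hp (sub_pos.2 hp') h

lemma abelTransform_withDensity {f : ℝ → ℝ≥0∞} (hf : Measurable f) (p : ℝ) (ρ : Measure ℝ) (τ : ℝ) :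
    abelTransform p (ρ.withDensity f) τ = ∫⁻ t, f t * ENNReal.ofReal (τ - t) ^ p ∂ρ :=
  lintegral_withDensity_eq_lintegral_mul _ hf (by fun_prop)

lemma abelTransform_withDensity_rpow_ne_top {p q : ℝ} (hp : 0 < p) (hq : 0 < q) {ρ : Measure ℝ}
    {T : ℝ} (hfin : ρ (Iio T) ≠ ∞) :
    abelTransform p (ρ.withDensity fun t => ENNReal.ofReal t ^ q) T ≠ ∞ := by
  rw [abelTransform_withDensity (by fun_prop)]
  have hbound (t : ℝ) : ENNReal.ofReal t ^ q * ENNReal.ofReal (T - t) ^ p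
      ≤ (Iio T).indicator (fun _ => ENNReal.ofReal T ^ q * ENNReal.ofReal T ^ p) t := by
    by_cases ht : t ∈ Iio T
    · rw [indicator_of_mem ht]
      rcases le_or_gt t 0 with ht₀ | ht₀
      · simp [ENNReal.ofReal_of_nonpos ht₀, hq]
      · gcongr
        · exact le_of_lt ht
        · linarith
    · simp [ENNReal.ofReal_of_nonpos (sub_nonpos.2 (not_lt.1 ht)), hp]
  refine ne_top_of_le_ne_top ?_ (lintegral_mono hbound)
  rw [lintegral_indicator_const measurableSet_Iio]
  finiteness

theorem measure_eq_of_abelTransform_withDensity_rpow_eq {p q : ℝ} (hp : 0 < p) (hp' : p < 1)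
    (hq : 0 < q) {ρ₁ ρ₂ : Measure ℝ} [SFinite ρ₁] [SFinite ρ₂]
    (hpos₁ : ∀ᵐ t ∂ρ₁, 0 < t) (hpos₂ : ∀ᵐ t ∂ρ₂, 0 < t) (hfin : ∀ T, ρ₁ (Iio T) ≠ ∞)
    (h : abelTransform p (ρ₁.withDensity fun t => ENNReal.ofReal t ^ q)
      = abelTransform p (ρ₂.withDensity fun t => ENNReal.ofReal t ^ q)) : ρ₁ = ρ₂ := by
  have hdensity := measure_eq_of_abelTransform_eq hp hp'
    (fun T => abelTransform_withDensity_rpow_ne_top one_pos hq (hfin T)) h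
  have hcancel {ρ : Measure ℝ} (hpos : ∀ᵐ t ∂ρ, 0 < t) :
      (ρ.withDensity fun t => ENNReal.ofReal t ^ q).withDensity
        (fun t => (ENNReal.ofReal t ^ q)⁻¹) = ρ := by
    refine withDensity_inv_same (by fun_prop) ?_ (.of_forall fun t => by finiteness)
    filter_upwards [hpos] with t ht
    simp [ht, hq]
  rw [← hcancel hpos₁, ← hcancel hpos₂, hdensity]

end Injectivity

section PhaseSpaceVolume

variable {X Y : Type*} [MeasurableSpace X] [MeasurableSpace Y] {μ : Measure X} {ν : Measure Y}
  {U : Set X} {V : Set Y} {v : X → ℝ} {w : Y → ℝ} {α : ℝ}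

lemma ofReal_sqrt_eq_rpow (x : ℝ) : ENNReal.ofReal √x = ENNReal.ofReal x ^ (1 / 2 : ℝ) := by
  rcases le_total 0 x with hx | hx
  · rw [Real.sqrt_eq_rpow, ENNReal.ofReal_rpow_of_nonneg hx (by norm_num)]
  · simp [Real.sqrt_eq_zero_of_nonpos hx, ENNReal.ofReal_of_nonpos hx]

lemma sq_div_add_lt_iff_mem_Ioo {y : ℝ} (hy : 0 < y) (α τ ξ : ℝ) :
    ξ ^ 2 / y + α ^ 2 * y < α ^ 2 * τ ↔
      ξ ∈ Ioo (-(|α| * √(y * (τ - y)))) (|α| * √(y * (τ - y))) := by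
  rw [← Real.sqrt_sq_eq_abs, ← Real.sqrt_mul (sq_nonneg α), mem_Ioo, ← Real.sq_lt,
    ← lt_sub_iff_add_lt, div_lt_iff₀ hy, ← mul_sub, mul_assoc, mul_comm (τ - y)]

lemma measure_prod_sublevel_eq_abelTransform [SFinite μ] (hU : MeasurableSet U)
    (hv : AEMeasurable v (μ.restrict U)) (hv_pos : ∀ x ∈ U, 0 < v x) (α τ : ℝ) :
    μ.prod volume {z : X × ℝ | z.1 ∈ U ∧ z.2 ^ 2 / v z.1 + α ^ 2 * v z.1 < α ^ 2 * τ}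
      = ENNReal.ofReal (2 * |α|) * abelTransform (1 / 2)
          (((μ.restrict U).map v).withDensity fun t => ENNReal.ofReal t ^ (1 / 2 : ℝ)) τ := by
  set r : X → ℝ := fun x => |α| * √(v x * (τ - v x))
  have hr : AEMeasurable r (μ.restrict U) := by fun_prop
  have hregion : {z : X × ℝ | z.1 ∈ U ∧ z.2 ^ 2 / v z.1 + α ^ 2 * v z.1 < α ^ 2 * τ}
      = regionBetween (-r) r U :=
    Set.ext fun z => and_congr_right fun hz => sq_div_add_lt_iff_mem_Ioo (hv_pos _ hz) α τ z.2
  rw [hregion, volume_regionBetween_eq_lintegral hr.neg hr hU,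
    abelTransform_withDensity (by fun_prop), lintegral_map' (by fun_prop) hv,
    ← lintegral_const_mul'' _ (by fun_prop)]
  refine setLIntegral_congr_fun hU fun x hx => ?_
  have hwidth : (r - -r) x = 2 * |α| * (√(v x) * √(τ - v x)) := by
    simp only [r, Pi.sub_apply, Pi.neg_apply, Real.sqrt_mul (hv_pos x hx).le]
    ring
  rw [hwidth, ENNReal.ofReal_mul (by positivity), ENNReal.ofReal_mul (Real.sqrt_nonneg _),
    ofReal_sqrt_eq_rpow, ofReal_sqrt_eq_rpow]

lemma map_restrict_Iio (hU : MeasurableSet U) (hv : AEMeasurable v (μ.restrict U)) (s : ℝ) :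
    (μ.restrict U).map v (Iio s) = μ {x | x ∈ U ∧ v x < s} := by
  rw [Measure.map_apply_of_aemeasurable hv measurableSet_Iio, Measure.restrict_apply' hU,
    inter_comm]
  rfl

theorem map_restrict_eq_of_measure_prod_sublevel_eq [SFinite μ] [SFinite ν]
    (hα : α ≠ 0) (hU : MeasurableSet U) (hV : MeasurableSet V)
    (hv : AEMeasurable v (μ.restrict U)) (hw : AEMeasurable w (ν.restrict V))
    (hv_pos : ∀ x ∈ U, 0 < v x) (hw_pos : ∀ y ∈ V, 0 < w y)
    (hv_fin : ∀ s, μ {x | x ∈ U ∧ v x < s} ≠ ∞)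
    (hmeas : ∀ L : ℝ,
      μ.prod volume {z : X × ℝ | z.1 ∈ U ∧ z.2 ^ 2 / v z.1 + α ^ 2 * v z.1 < L}
        = ν.prod volume {z : Y × ℝ | z.1 ∈ V ∧ z.2 ^ 2 / w z.1 + α ^ 2 * w z.1 < L}) :
    (μ.restrict U).map v = (ν.restrict V).map w := by
  refine measure_eq_of_abelTransform_withDensity_rpow_eq (p := 1 / 2) (q := 1 / 2)
    (by norm_num) (by norm_num) (by norm_num) ?_ ?_ ?_ (funext fun τ => ?_)
  · exact (ae_map_iff hv measurableSet_Ioi).2 (ae_restrict_of_forall_mem hU hv_pos)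
  · exact (ae_map_iff hw measurableSet_Ioi).2 (ae_restrict_of_forall_mem hV hw_pos)
  · exact fun s => (map_restrict_Iio hU hv s).trans_ne (hv_fin s)
  · have hτ := hmeas (α ^ 2 * τ)
    rw [measure_prod_sublevel_eq_abelTransform hU hv hv_pos,
      measure_prod_sublevel_eq_abelTransform hV hw hw_pos] at hτ
    exact (ENNReal.mul_right_inj (by simpa using hα) ENNReal.ofReal_ne_top).1 hτ

end PhaseSpaceVolume

section Minimum

lemma measure_sublevel_pos_iff_lt {X : Type*} [TopologicalSpace X] [MeasurableSpace X]
    {μ : Measure X} [μ.IsOpenPosMeasure] {U : Set X} (hU : IsOpen U) {v : X → ℝ}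
    (hv : ContinuousOn v U) {x₀ : X} (hx₀ : x₀ ∈ U) (hmin : IsMinOn v U x₀) (s : ℝ) :
    0 < μ {x | x ∈ U ∧ v x < s} ↔ v x₀ < s := by
  constructor
  · intro hpos
    obtain ⟨x, hxU, hxs⟩ := nonempty_of_measure_ne_zero hpos.ne'
    exact (hmin hxU).trans_lt hxs
  · exact fun hs => (hv.isOpen_inter_preimage hU isOpen_Iio).measure_pos μ ⟨x₀, hx₀, hs⟩

lemma isMinOn_Ioo_of_antitoneOn_of_monotoneOn {A B : Type*}
    [LinearOrder A] [TopologicalSpace A] [OrderTopology A] [DenselyOrdered A]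
    [LinearOrder B] [TopologicalSpace B] [OrderClosedTopology B] {f : A → B} {a b c : A}
    (hb : b ∈ Ioo a c) (hf : ContinuousOn f (Ioo a c)) (hanti : AntitoneOn f (Ioo a b))
    (hmono : MonotoneOn f (Ioo b c)) : IsMinOn f (Ioo a c) b := by
  have hf_left : ContinuousWithinAt f (Ioo a b) b := (hf b hb).mono (Ioo_subset_Ioo_right hb.2.le)
  have hf_right : ContinuousWithinAt f (Ioo b c) b := (hf b hb).mono (Ioo_subset_Ioo_left hb.1.le)
  have hb_left : b ∈ closure (Ioo a b) := closure_Ioo hb.1.ne ▸ right_mem_Icc.2 hb.1.le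
  have hb_right : b ∈ closure (Ioo b c) := closure_Ioo hb.2.ne ▸ left_mem_Icc.2 hb.2.le
  have hanti' : AntitoneOn f (insert b (Ioo a b)) := MonotoneOn.insert_of_continuousWithinAt
    (β := Bᵒᵈ) hanti.dual_right (mem_closure_iff_clusterPt.1 hb_left) hf_left
  have hmono' : MonotoneOn f (insert b (Ioo b c)) :=
    hmono.insert_of_continuousWithinAt (mem_closure_iff_clusterPt.1 hb_right) hf_right
  rw [Ioo_insert_right hb.1] at hanti'
  rw [Ioo_insert_left hb.2] at hmono'
  exact isMinOn_Ioo_of_anti_mono hanti' hmono'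

end Minimum

theorem leading_invariant_determines_sublevel_measures_general
    {X Y : Type*} [TopologicalSpace X] [MeasurableSpace X] [OpensMeasurableSpace X]
    [TopologicalSpace Y] [MeasurableSpace Y] [OpensMeasurableSpace Y]
    {μ : Measure X} [SFinite μ] [μ.IsOpenPosMeasure]
    {ν : Measure Y} [SFinite ν] [ν.IsOpenPosMeasure]
    {U : Set X} {V : Set Y} (hU : IsOpen U) (hV : IsOpen V)
    {α : ℝ} (hα : α ≠ 0) {v : X → ℝ} {w : Y → ℝ} (hv : ContinuousOn v U) (hw : ContinuousOn w V)
    (hv_pos : ∀ x ∈ U, 0 < v x) (hw_pos : ∀ y ∈ V, 0 < w y)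
    {x₀ : X} {y₀ : Y} (hx₀ : x₀ ∈ U) (hy₀ : y₀ ∈ V)
    (hv_min : IsMinOn v U x₀) (hw_min : IsMinOn w V y₀)
    (hv_fin : ∀ s, μ {x | x ∈ U ∧ v x < s} ≠ ∞)
    (hmeas : ∀ L : ℝ,
      μ.prod volume {z : X × ℝ | z.1 ∈ U ∧ z.2 ^ 2 / v z.1 + α ^ 2 * v z.1 < L}
        = ν.prod volume {z : Y × ℝ | z.1 ∈ V ∧ z.2 ^ 2 / w z.1 + α ^ 2 * w z.1 < L}) :
    v x₀ = w y₀ ∧ ∀ s, μ {x | x ∈ U ∧ v x < s} = ν {y | y ∈ V ∧ w y < s} := by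
  have hv_meas : AEMeasurable v (μ.restrict U) := hv.aemeasurable hU.measurableSet
  have hw_meas : AEMeasurable w (ν.restrict V) := hw.aemeasurable hV.measurableSet
  have hmap : (μ.restrict U).map v = (ν.restrict V).map w :=
    map_restrict_eq_of_measure_prod_sublevel_eq hα hU.measurableSet hV.measurableSet
      hv_meas hw_meas hv_pos hw_pos hv_fin hmeas
  have hsub (s : ℝ) : μ {x | x ∈ U ∧ v x < s} = ν {y | y ∈ V ∧ w y < s} := by
    rw [← map_restrict_Iio hU.measurableSet hv_meas, hmap,
      map_restrict_Iio hV.measurableSet hw_meas]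
  refine ⟨eq_of_forall_gt_iff fun s => ?_, hsub⟩
  rw [← measure_sublevel_pos_iff_lt hU hv hx₀ hv_min (μ := μ), hsub,
    measure_sublevel_pos_iff_lt hV hw hy₀ hw_min]

/-- If two positive C¹ single wells `v`, `w` on `(-1,1)` (tending to `+∞` at `±1`) give
sublevel regions `{ξ²/v + α²v < λ}` and `{ξ²/w + α²w < λ}` of equal area for every `λ`, then
their minimum values agree and the sublevel sets `{v < s}` and `{w < s}` have equal measure for
every `s` above the common minimum value. -/
theorem leading_invariant_determines_sublevel_measures
    (α : ℝ) (hα : α ≠ 0) (v w : ℝ → ℝ)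
    (hv_diff : ContDiffOn ℝ 1 v (Ioo (-1) 1))
    (hw_diff : ContDiffOn ℝ 1 w (Ioo (-1) 1))
    (hv_pos : ∀ x ∈ Ioo (-1 : ℝ) 1, 0 < v x)
    (hw_pos : ∀ x ∈ Ioo (-1 : ℝ) 1, 0 < w x)
    (hv_anti : StrictAntiOn v (Ioo (-1) 0)) (hv_mono : StrictMonoOn v (Ioo 0 1))
    (hw_anti : StrictAntiOn w (Ioo (-1) 0)) (hw_mono : StrictMonoOn w (Ioo 0 1))
    (hv_left : Tendsto v (𝓝[>] (-1 : ℝ)) atTop) (hv_right : Tendsto v (𝓝[<] (1 : ℝ)) atTop)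
    (hw_left : Tendsto w (𝓝[>] (-1 : ℝ)) atTop) (hw_right : Tendsto w (𝓝[<] (1 : ℝ)) atTop)
    (hcv : 0 < v 0) (hcw : 0 < w 0)
    (hmeas : ∀ L : ℝ,
      volume {p : ℝ × ℝ | p.1 ∈ Ioo (-1 : ℝ) 1 ∧ p.2 ^ 2 / v p.1 + α ^ 2 * v p.1 < L}
        = volume {p : ℝ × ℝ | p.1 ∈ Ioo (-1 : ℝ) 1 ∧ p.2 ^ 2 / w p.1 + α ^ 2 * w p.1 < L}) :
    v 0 = w 0 ∧
      ∀ s > v 0,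
        volume {x : ℝ | x ∈ Ioo (-1 : ℝ) 1 ∧ v x < s}
          = volume {x : ℝ | x ∈ Ioo (-1 : ℝ) 1 ∧ w x < s} := by
  have h0 : (0 : ℝ) ∈ Ioo (-1 : ℝ) 1 := by norm_num
  have hv_min : IsMinOn v (Ioo (-1) 1) 0 := isMinOn_Ioo_of_antitoneOn_of_monotoneOn h0
    hv_diff.continuousOn hv_anti.antitoneOn hv_mono.monotoneOn
  have hw_min : IsMinOn w (Ioo (-1) 1) 0 := isMinOn_Ioo_of_antitoneOn_of_monotoneOn h0
    hw_diff.continuousOn hw_anti.antitoneOn hw_mono.monotoneOn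
  exact (leading_invariant_determines_sublevel_measures_general isOpen_Ioo isOpen_Ioo hα
    hv_diff.continuousOn hw_diff.continuousOn hv_pos hw_pos h0 h0 hv_min hw_min
    (fun _ => measure_ne_top_of_subset (sep_subset _ _) measure_Ioo_lt_top.ne)
    hmeas).imp_right fun h s _ => h s
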